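/- arXiv:2407.03973 — 2 statements merged into one kernel-verified Lean document; each statement's English description precedes it below -/
import Mathlib

section
/- Let R be a commutative ring and c, d ∈ R. Then H is the internal direct sum of H_h and H_v (that is, H_h + H_v = H and H_h ∩ H_v = 0) if and only if both (c) ∩ (d) = (c·d) and ann(c·d) = M. -/
open Submodule

section Core
variable (R : Type*) [CommRing R]

/-- The annihilator ideal of an element `c`: `{r : R | c * r = 0}`. -/
def annI (c : R) : Ideal R := LinearMap.ker (LinearMap.lsmul R R c)

lemma mem_annI {R : Type*} [CommRing R] {c r : R} : r ∈ annI R c ↔ c * r = 0 := Iff.rfl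

/-- `Z = {(f, g) | c * f = d * g}`. -/
def Zsub (c d : R) : Submodule R (R × R) where
  carrier := {p | c * p.1 = d * p.2}
  add_mem' := by
    rintro ⟨a1, a2⟩ ⟨b1, b2⟩ ha hb
    simp only [Set.mem_setOf_eq] at *
    simp [mul_add, ha, hb]
  zero_mem' := by simp
  smul_mem' := by
    rintro r ⟨p1, p2⟩ hp
    simp only [Set.mem_setOf_eq, Prod.smul_fst, Prod.smul_snd, smul_eq_mul] at *
    rw [mul_left_comm, hp, mul_left_comm]

lemma mem_Zsub {R : Type*} [CommRing R] {c d f g : R} :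
    (f, g) ∈ Zsub R c d ↔ c * f = d * g := Iff.rfl

/-- `B = {(d * r, c * r) | r ∈ R}`. -/
def Bsub (c d : R) : Submodule R (R × R) :=
  LinearMap.range ((LinearMap.lsmul R R d).prod (LinearMap.lsmul R R c))

/-- The homology `H = Z / B`. -/
abbrev Hmod (c d : R) := Zsub R c d ⧸ (Bsub R c d).comap (Zsub R c d).subtype

/-- The class `[f, g] ∈ H` of a pair `(f, g)` with `c * f = d * g`. -/
def Hmk (c d : R) (f g : R) (h : c * f = d * g) : Hmod R c d :=
  Submodule.Quotient.mk ⟨(f, g), h⟩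

/-- The submodule of `H` generated by horizontally pure classes `[f, 0]`. -/
def Hpureh (c d : R) : Submodule R (Hmod R c d) :=
  span R {h | ∃ f, ∃ hf : c * f = d * 0, h = Hmk R c d f 0 hf}

/-- The submodule of `H` generated by vertically pure classes `[0, g]`. -/
def Hpurev (c d : R) : Submodule R (Hmod R c d) :=
  span R {h | ∃ g, ∃ hg : c * 0 = d * g, h = Hmk R c d 0 g hg}

/-- The ideal `M = {r ∈ ann(cd) | ∃ f ∈ ann(c), g ∈ ann(d), rd = fd ∧ rc = gc}`. -/
def Msub (c d : R) : Ideal R where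
  carrier := {r | r ∈ annI R (c * d) ∧
    ∃ f ∈ annI R c, ∃ g ∈ annI R d, r * d = f * d ∧ r * c = g * c}
  zero_mem' := ⟨zero_mem _, 0, zero_mem _, 0, zero_mem _, by simp, by simp⟩
  add_mem' := by
    rintro a b ⟨ha, f, hf, g, hg, hfd, hgc⟩ ⟨hb, f', hf', g', hg', hfd', hgc'⟩
    exact ⟨add_mem ha hb, f + f', add_mem hf hf', g + g', add_mem hg hg',
      by rw [add_mul, add_mul, hfd, hfd'], by rw [add_mul, add_mul, hgc, hgc']⟩
  smul_mem' := by
    rintro s a ⟨ha, f, hf, g, hg, hfd, hgc⟩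
    refine ⟨Submodule.smul_mem _ s ha, s * f, ?_, s * g, ?_, ?_, ?_⟩
    · simpa [smul_eq_mul] using Submodule.smul_mem _ s hf
    · simpa [smul_eq_mul] using Submodule.smul_mem _ s hg
    · show (s * a) * d = (s * f) * d
      rw [mul_assoc, hfd, mul_assoc]
    · show (s * a) * c = (s * g) * c
      rw [mul_assoc, hgc, mul_assoc]

lemma mem_Msub {R : Type*} [CommRing R] {c d r : R} :
    r ∈ Msub R c d ↔ r ∈ annI R (c * d) ∧
      ∃ f ∈ annI R c, ∃ g ∈ annI R d, r * d = f * d ∧ r * c = g * c := Iff.rfl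

end Core

section Helpers
variable {R : Type*} [CommRing R]

lemma dr_mem_annI {c d r : R} (hr : r ∈ annI R (c * d)) : d * r ∈ annI R c := by
  rw [mem_annI] at *
  rw [← mul_assoc]; exact hr

lemma cr_mem_annI {c d r : R} (hr : r ∈ annI R (c * d)) : c * r ∈ annI R d := by
  rw [mem_annI] at *
  calc d * (c * r) = c * d * r := by ring
  _ = 0 := hr

lemma ann_pair_Z {c d f g : R} (hf : f ∈ annI R c) (hg : g ∈ annI R d) :
    c * f = d * g := by
  rw [mem_annI] at hf hg; rw [hf, hg]

lemma cf_mem_inf {c d f g : R} (h : c * f = d * g) :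
    c * f ∈ Ideal.span {c} ⊓ Ideal.span {d} := by
  refine Submodule.mem_inf.mpr ⟨?_, ?_⟩
  · exact Ideal.mem_span_singleton.mpr ⟨f, rfl⟩
  · exact Ideal.mem_span_singleton.mpr ⟨g, h⟩

lemma rc_mem_inf_ann {c d r : R} (hr : r ∈ annI R (c * d)) :
    r * c ∈ Ideal.span {c} ⊓ annI R d := by
  rw [mem_annI] at hr
  refine Submodule.mem_inf.mpr ⟨Ideal.mem_span_singleton.mpr ⟨r, mul_comm r c⟩, ?_⟩
  rw [mem_annI]
  calc d * (r * c) = c * d * r := by ring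
  _ = 0 := hr

lemma rd_mem_ann_inf {c d r : R} (hr : r ∈ annI R (c * d)) :
    r * d ∈ annI R c ⊓ Ideal.span {d} := by
  rw [mem_annI] at hr
  refine Submodule.mem_inf.mpr ⟨?_, Ideal.mem_span_singleton.mpr ⟨r, mul_comm r d⟩⟩
  rw [mem_annI]
  calc c * (r * d) = c * d * r := by ring
  _ = 0 := hr

lemma HmkPQ {c d P Q : R} (hP : annI R c = Ideal.span {P}) (hQ : annI R d = Ideal.span {Q})
    (f g : R) : c * (f * P) = d * (g * Q) := by
  have hp : c * P = 0 := by
    rw [← mem_annI (R := R)]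
    rw [hP]
    exact Ideal.mem_span_singleton_self P
  have hq : d * Q = 0 := by
    rw [← mem_annI (R := R)]
    rw [hQ]
    exact Ideal.mem_span_singleton_self Q
  calc c * (f * P) = f * (c * P) := by ring
  _ = 0 := by rw [hp, mul_zero]
  _ = g * (d * Q) := by rw [hq, mul_zero]
  _ = d * (g * Q) := by ring

end Helpers

section QuotTypes
variable (R : Type*) [CommRing R]

/-- `ann(cd)/M`. -/
abbrev Tcd (c d : R) :=
  ↥(annI R (c * d)) ⧸ Submodule.comap (annI R (c * d)).subtype (Msub R c d)

/-- `ann(c)/(ann(c)·(d))`. -/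
abbrev Th (c d : R) :=
  ↥(annI R c) ⧸ Submodule.comap (annI R c).subtype (annI R c * Ideal.span {d})

/-- `ann(d)/((c)·ann(d))`. -/
abbrev Tv (c d : R) :=
  ↥(annI R d) ⧸ Submodule.comap (annI R d).subtype (Ideal.span {c} * annI R d)

/-- `((c) ∩ (d))/(cd)`. -/
abbrev T4 (c d : R) :=
  ↥(Ideal.span {c} ⊓ Ideal.span {d}) ⧸
    Submodule.comap (Ideal.span {c} ⊓ Ideal.span {d}).subtype (Ideal.span {c * d})

/-- `((c) ∩ ann(d))/((c)·ann(d))`. -/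
abbrev Tc' (c d : R) :=
  ↥(Ideal.span {c} ⊓ annI R d) ⧸
    Submodule.comap (Ideal.span {c} ⊓ annI R d).subtype (Ideal.span {c} * annI R d)

/-- `(ann(c) ∩ (d))/(ann(c)·(d))`. -/
abbrev Td' (c d : R) :=
  ↥(annI R c ⊓ Ideal.span {d}) ⧸
    Submodule.comap (annI R c ⊓ Ideal.span {d}).subtype (annI R c * Ideal.span {d})

/-- `φ : Z → R`, `(f, g) ↦ c·f`. -/
def phiZ (c d : R) : Zsub R c d →ₗ[R] R :=
  LinearMap.lsmul R R c ∘ₗ (LinearMap.fst R R R ∘ₗ (Zsub R c d).subtype)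

end QuotTypes

variable {R : Type*} [CommRing R]

lemma Hmk_eq_Hmk_iff {c d f g f' g' : R} (h : c * f = d * g) (h' : c * f' = d * g') :
    Hmk R c d f g h = Hmk R c d f' g' h' ↔ ∃ r, d * r = f - f' ∧ c * r = g - g' := by
  rw [Hmk, Hmk, Submodule.Quotient.eq, Submodule.mem_comap, Bsub, LinearMap.mem_range]
  simp [Prod.ext_iff]

lemma Hmk_add_Hmk {c d f g f' g' : R} (h : c * f = d * g) (h' : c * f' = d * g') :
    Hmk R c d f g h + Hmk R c d f' g' h' =
      Hmk R c d (f + f') (g + g') (by rw [mul_add, mul_add, h, h']) := rfl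

lemma smul_Hmk {c d f g : R} (r : R) (h : c * f = d * g) :
    r • Hmk R c d f g h =
      Hmk R c d (r * f) (r * g) (by rw [mul_left_comm, h, mul_left_comm]) := rfl

lemma Hmk_zero (c d : R) : Hmk R c d 0 0 (by simp) = 0 := rfl

lemma exists_eq_Hmk {c d : R} (x : Hmod R c d) : ∃ f g, ∃ h, x = Hmk R c d f g h := by
  obtain ⟨⟨⟨f, g⟩, h⟩, rfl⟩ := Submodule.Quotient.mk_surjective _ x
  exact ⟨f, g, h, rfl⟩

lemma mem_Hpureh {c d : R} {x : Hmod R c d} :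
    x ∈ Hpureh R c d ↔ ∃ f, ∃ hf : c * f = d * 0, x = Hmk R c d f 0 hf := by
  refine ⟨fun hx => ?_, fun hx => subset_span hx⟩
  induction hx using span_induction with
  | mem x hx => exact hx
  | zero => exact ⟨0, by simp, rfl⟩
  | add x y _ _ hx hy =>
    obtain ⟨f, hf, rfl⟩ := hx
    obtain ⟨f', hf', rfl⟩ := hy
    exact ⟨f + f', by rw [mul_add, hf, hf']; simp, by simp [Hmk_add_Hmk]⟩
  | smul r x _ hx =>
    obtain ⟨f, hf, rfl⟩ := hx
    exact ⟨r * f, by rw [mul_left_comm, hf]; simp, by simp [smul_Hmk]⟩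

lemma mem_Hpurev {c d : R} {x : Hmod R c d} :
    x ∈ Hpurev R c d ↔ ∃ g, ∃ hg : c * 0 = d * g, x = Hmk R c d 0 g hg := by
  refine ⟨fun hx => ?_, fun hx => subset_span hx⟩
  induction hx using span_induction with
  | mem x hx => exact hx
  | zero => exact ⟨0, by simp, rfl⟩
  | add x y _ _ hx hy =>
    obtain ⟨g, hg, rfl⟩ := hx
    obtain ⟨g', hg', rfl⟩ := hy
    exact ⟨g + g', by rw [mul_add, ← hg, ← hg']; simp, by simp [Hmk_add_Hmk]⟩
  | smul r x _ hx =>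
    obtain ⟨g, hg, rfl⟩ := hx
    exact ⟨r * g, by rw [mul_left_comm, ← hg]; simp, by simp [smul_Hmk]⟩

/-- Every class is a sum of pure classes iff `(c) ∩ (d) = (cd)`. -/
lemma Hpureh_sup_Hpurev_eq_top_iff (c d : R) :
    Hpureh R c d ⊔ Hpurev R c d = ⊤ ↔
      Ideal.span {c} ⊓ Ideal.span {d} = Ideal.span {c * d} := by
  constructor
  · intro htop
    refine le_antisymm (fun x hx => ?_) (le_inf ?_ ?_)
    · obtain ⟨hc, hd⟩ := Submodule.mem_inf.mp hx
      obtain ⟨f, rfl⟩ := Ideal.mem_span_singleton.mp hc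
      obtain ⟨g, hg⟩ := Ideal.mem_span_singleton.mp hd
      obtain ⟨y, hy, z, hz, hyz⟩ :=
        Submodule.mem_sup.mp (htop ▸ Submodule.mem_top : Hmk R c d f g hg ∈ _)
      obtain ⟨p, hp, rfl⟩ := mem_Hpureh.mp hy
      obtain ⟨q, hq, rfl⟩ := mem_Hpurev.mp hz
      rw [Hmk_add_Hmk, Hmk_eq_Hmk_iff] at hyz
      obtain ⟨r, hr, -⟩ := hyz
      exact Ideal.mem_span_singleton.mpr ⟨-r, by linear_combination hp + c * hr⟩
    · exact Ideal.span_singleton_le_span_singleton.mpr (dvd_mul_right c d)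
    · exact Ideal.span_singleton_le_span_singleton.mpr (dvd_mul_left d c)
  · intro hcd
    refine eq_top_iff.mpr fun x _ => ?_
    obtain ⟨f, g, h, rfl⟩ := exists_eq_Hmk x
    obtain ⟨r, hr⟩ := Ideal.mem_span_singleton.mp (hcd ▸ cf_mem_inf h)
    have hf : c * (f - d * r) = d * 0 := by linear_combination hr
    have hg : c * 0 = d * (g - c * r) := by linear_combination h - hr
    refine Submodule.mem_sup.mpr
      ⟨_, mem_Hpureh.mpr ⟨_, hf, rfl⟩, _, mem_Hpurev.mpr ⟨_, hg, rfl⟩, ?_⟩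
    rw [Hmk_add_Hmk, Hmk_eq_Hmk_iff]
    exact ⟨-r, by ring, by ring⟩

/-- Only the zero class is both horizontally and vertically pure iff `ann(cd) = M`. -/
lemma Hpureh_inf_Hpurev_eq_bot_iff (c d : R) :
    Hpureh R c d ⊓ Hpurev R c d = ⊥ ↔ annI R (c * d) = Msub R c d := by
  constructor
  · intro hbot
    refine le_antisymm (fun r hr => ?_) fun r hr => hr.1
    have hr0 : c * d * r = 0 := hr
    have hf : c * (d * r) = d * 0 := by linear_combination hr0
    have hg : c * 0 = d * (-(c * r)) := by linear_combination hr0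
    have hmem : Hmk R c d (d * r) 0 hf ∈ Hpureh R c d ⊓ Hpurev R c d :=
      ⟨mem_Hpureh.mpr ⟨_, hf, rfl⟩, mem_Hpurev.mpr
        ⟨_, hg, (Hmk_eq_Hmk_iff _ _).mpr ⟨r, by ring, by ring⟩⟩⟩
    rw [hbot, Submodule.mem_bot, ← Hmk_zero, Hmk_eq_Hmk_iff] at hmem
    obtain ⟨s, hds, hcs⟩ := hmem
    exact ⟨hr, s, mem_annI.mpr (by linear_combination hcs), r - s,
      mem_annI.mpr (by linear_combination -hds), by linear_combination -hds,
      by linear_combination hcs⟩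
  · intro hM
    refine eq_bot_iff.mpr fun x hx => ?_
    obtain ⟨hh, hv⟩ := Submodule.mem_inf.mp hx
    obtain ⟨f, hf, rfl⟩ := mem_Hpureh.mp hh
    obtain ⟨g, hg, hfg⟩ := mem_Hpurev.mp hv
    obtain ⟨r, hdr, -⟩ := (Hmk_eq_Hmk_iff _ _).mp hfg
    have hr : r ∈ annI R (c * d) := mem_annI.mpr (by linear_combination c * hdr + hf)
    rw [hM] at hr
    obtain ⟨-, s, hs, -, -, hsd, -⟩ := hr
    rw [mem_annI] at hs
    rw [Submodule.mem_bot, ← Hmk_zero, Hmk_eq_Hmk_iff]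
    exact ⟨s, by linear_combination hdr - hsd, by linear_combination hs⟩

theorem stmt4 (c d : R) :
    (Hpureh R c d ⊔ Hpurev R c d = ⊤ ∧ Hpureh R c d ⊓ Hpurev R c d = ⊥) ↔
      (Ideal.span {c} ⊓ Ideal.span {d} = Ideal.span {c * d} ∧
        annI R (c * d) = Msub R c d) :=
  and_congr (Hpureh_sup_Hpurev_eq_top_iff c d) (Hpureh_inf_Hpurev_eq_bot_iff c d)
end

section
/- Let ℓ, m be positive integers and R = F₂[x, y]/(xˡ − 1, yᵐ − 1). Suppose c ∈ R is either (i) the image of a univariate polynomial (in x alone or in y alone), or (ii) semiperiodic, i.e. c = x^k + ζ(y) with k·k' = ℓ for some ζ(y) ∈ F₂[y], or c = y^k + ξ(x) with k·k' = m for some ξ(x) ∈ F₂[x]. Then the annihilator ideal ann_R(c) is principal. Consequently, if c, d ∈ R are each univariate or semiperiodic and (c) ∩ (d) = (c·d), then the bivariate bicycle code C(c, d) is principal, i.e. it is pure and ann_R(c), ann_R(d) are principal ideals. -/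
open Submodule

/-- The ring `F₂[x, y]/(xˡ − 1, yᵐ − 1)` underlying bivariate bicycle codes. -/
abbrev BBRing (l m : ℕ) : Type :=
  MvPolynomial (Fin 2) (ZMod 2) ⧸
    Ideal.span {(MvPolynomial.X 0 : MvPolynomial (Fin 2) (ZMod 2)) ^ l - 1,
      (MvPolynomial.X 1 : MvPolynomial (Fin 2) (ZMod 2)) ^ m - 1}

/-- The ideal `(xˡ − 1, yᵐ − 1)`. -/
noncomputable abbrev BBIdeal (l m : ℕ) : Ideal (MvPolynomial (Fin 2) (ZMod 2)) :=
  Ideal.span {(MvPolynomial.X 0 : MvPolynomial (Fin 2) (ZMod 2)) ^ l - 1,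
    (MvPolynomial.X 1 : MvPolynomial (Fin 2) (ZMod 2)) ^ m - 1}

/-- `c ∈ R` is the image of a univariate polynomial (in `x` alone or in `y` alone),
or is semiperiodic: `c = x^k + ζ(y)` with `k·k' = ℓ`, or `c = y^k + ξ(x)` with
`k·k' = m`. -/
def IsUniOrSemiperiodic (l m : ℕ) (c : BBRing l m) : Prop :=
  (∃ p : Polynomial (ZMod 2), c = Ideal.Quotient.mk (BBIdeal l m)
    (Polynomial.aeval (MvPolynomial.X 0 : MvPolynomial (Fin 2) (ZMod 2)) p)) ∨
  (∃ p : Polynomial (ZMod 2), c = Ideal.Quotient.mk (BBIdeal l m)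
    (Polynomial.aeval (MvPolynomial.X 1 : MvPolynomial (Fin 2) (ZMod 2)) p)) ∨
  (∃ (k k' : ℕ) (z : Polynomial (ZMod 2)), 0 < k ∧ 0 < k' ∧ k * k' = l ∧
    c = Ideal.Quotient.mk (BBIdeal l m)
      ((MvPolynomial.X 0 : MvPolynomial (Fin 2) (ZMod 2)) ^ k +
        Polynomial.aeval (MvPolynomial.X 1 : MvPolynomial (Fin 2) (ZMod 2)) z)) ∨
  (∃ (k k' : ℕ) (z : Polynomial (ZMod 2)), 0 < k ∧ 0 < k' ∧ k * k' = m ∧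
    c = Ideal.Quotient.mk (BBIdeal l m)
      ((MvPolynomial.X 1 : MvPolynomial (Fin 2) (ZMod 2)) ^ k +
        Polynomial.aeval (MvPolynomial.X 0 : MvPolynomial (Fin 2) (ZMod 2)) z))

section Purity
variable {R : Type*} [CommRing R]

/-- If `(c) ∩ (d) = (c * d)`, then the homology is generated by pure classes. -/
lemma Hpureh_sup_Hpurev_eq_top {c d : R}
    (h : Ideal.span {c} ⊓ Ideal.span {d} = Ideal.span {c * d}) :
    Hpureh R c d ⊔ Hpurev R c d = ⊤ := by
  refine eq_top_iff.mpr fun x _ => ?_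
  obtain ⟨⟨⟨f, g⟩, hfg⟩, rfl⟩ := Submodule.Quotient.mk_surjective _ x
  have hfg' : c * f = d * g := hfg
  have hmem := cf_mem_inf hfg'
  rw [h, Ideal.mem_span_singleton] at hmem
  obtain ⟨r, hr⟩ := hmem
  have hf : c * (f - d * r) = d * 0 := by linear_combination hr
  have hg : c * 0 = d * (g - c * r) := by linear_combination hfg' - hr
  refine Submodule.mem_sup.mpr ⟨Hmk R c d (f - d * r) 0 hf,
    Submodule.subset_span ⟨_, hf, rfl⟩, Hmk R c d 0 (g - c * r) hg,
    Submodule.subset_span ⟨_, hg, rfl⟩, ?_⟩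
  refine (Submodule.Quotient.eq _).mpr ⟨-r, ?_⟩
  ext <;> simp

end Purity

section Annihilators
open Polynomial
variable {A R : Type*} [CommRing A] [CommRing R]

/-- A polynomial annihilated modulo a monic `D` by a constant `e` is, modulo `D`, a multiple of
any constant dividing the annihilator of `e`. -/
lemma exists_eq_mul_add_C_mul_of_dvd_C_mul {D a : A[X]} (hD : D.Monic) {e h : A}
    (hh : ∀ r, e * r = 0 → h ∣ r) (ha : D ∣ C e * a) :
    ∃ a₁ b : A[X], a = D * a₁ + C h * b := by
  rw [← modByMonic_eq_zero_iff_dvd hD, ← smul_eq_C_mul, smul_modByMonic] at ha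
  have hdvd : C h ∣ a %ₘ D := by
    refine C_dvd_iff_dvd_coeff _ _ |>.mpr fun i => hh _ ?_
    simpa using congrArg (coeff · i) ha
  obtain ⟨b, hb⟩ := hdvd
  exact ⟨a /ₘ D, b, by rw [← hb, add_comm, modByMonic_add_div]⟩

lemma exists_generator_annI [IsPrincipalIdealRing A] (e : A) :
    ∃ h, e * h = 0 ∧ ∀ r, e * r = 0 → h ∣ r := by
  obtain ⟨h, hh⟩ := IsPrincipalIdealRing.principal (annI A e)
  have hh' : annI A e = Ideal.span {h} := hh
  refine ⟨h, ?_, fun r hr => ?_⟩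
  · rw [← mem_annI, hh']
    exact Ideal.mem_span_singleton_self h
  · rwa [← mem_annI, hh', Ideal.mem_span_singleton] at hr

/-- In a monogenic quotient `A[X] / (E)` with `E` monic, constants have principal annihilator. -/
lemma annI_map_C_isPrincipal [IsPrincipalIdealRing A] (φ : A[X] →+* R)
    (hφ : Function.Surjective φ) {E : A[X]} (hE : E.Monic)
    (hker : ∀ f, φ f = 0 ↔ E ∣ f) (e : A) : (annI R (φ (C e))).IsPrincipal := by
  obtain ⟨h, heh, hh⟩ := exists_generator_annI e
  refine ⟨φ (C h), le_antisymm (fun r hr => ?_) ?_⟩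
  · obtain ⟨f, rfl⟩ := hφ r
    rw [mem_annI, ← map_mul, hker] at hr
    obtain ⟨a, b, rfl⟩ := exists_eq_mul_add_C_mul_of_dvd_C_mul hE hh hr
    refine Ideal.mem_span_singleton.mpr ⟨φ b, ?_⟩
    rw [map_add, (hker _).mpr (dvd_mul_right E a), zero_add, map_mul]
  · refine (Ideal.span_singleton_le_iff_mem _).mpr ?_
    rw [mem_annI, ← map_mul, ← C_mul, heh, C_0, map_zero]

/-- In `A[X] / (E)`, a monic `D` dividing `E` up to a constant has principal annihilator. -/
lemma annI_map_monic_isPrincipal [IsPrincipalIdealRing A] (φ : A[X] →+* R)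
    (hφ : Function.Surjective φ) {D E q : A[X]} {e : A} (hD : D.Monic) (hE : E = D * q + C e)
    (hker : ∀ f, φ f = 0 ↔ E ∣ f) : (annI R (φ D)).IsPrincipal := by
  obtain ⟨h, heh, hh⟩ := exists_generator_annI e
  have hCeh : C e * C h = 0 := by rw [← C_mul, heh, C_0]
  refine ⟨φ (C h * q), le_antisymm (fun r hr => ?_) ?_⟩
  · obtain ⟨f, rfl⟩ := hφ r
    rw [mem_annI, ← map_mul, hker] at hr
    obtain ⟨a, ha⟩ := hr
    have hdvd : D ∣ C e * a := ⟨f - q * a, by linear_combination -ha - a * hE⟩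
    obtain ⟨a₁, b, rfl⟩ := exists_eq_mul_add_C_mul_of_dvd_C_mul hD hh hdvd
    have hf : f = E * a₁ + C h * q * b := by
      refine hD.isRegular.left ?_
      change D * f = D * _
      linear_combination ha + C h * b * hE + b * hCeh
    refine Ideal.mem_span_singleton.mpr ⟨φ b, ?_⟩
    rw [hf, map_add, (hker _).mpr (dvd_mul_right E a₁), zero_add, map_mul]
  · refine (Ideal.span_singleton_le_iff_mem _).mpr ?_
    rw [mem_annI, ← map_mul, hker]
    exact ⟨C h, by linear_combination -C h * hE - hCeh⟩

end Annihilators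

section Presentation
open Polynomial
variable {K : Type*} [Field K]

instance isPrincipalIdealRing_adjoinRoot (f : K[X]) : IsPrincipalIdealRing (AdjoinRoot f) :=
  IsPrincipalIdealRing.of_surjective _ (AdjoinRoot.mk_surjective (g := f))

/-- `K[x, y] / (xᵃ - 1, yᵇ - 1)` is the quotient of `(K[y] / (yᵇ - 1))[x]` by `xᵃ - 1`. -/
lemma exists_presentation {i j : Fin 2} (hij : i ≠ j) (a b : ℕ)
    {I : Ideal (MvPolynomial (Fin 2) K)}
    (hI : I = Ideal.span {MvPolynomial.X i ^ a - 1, MvPolynomial.X j ^ b - 1}) :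
    ∃ φ : (AdjoinRoot (X ^ b - 1 : K[X]))[X] →+* MvPolynomial (Fin 2) K ⧸ I,
      Function.Surjective φ ∧ (∀ f, φ f = 0 ↔ X ^ a - 1 ∣ f) ∧
      φ X = Ideal.Quotient.mk I (MvPolynomial.X i) ∧
      ∀ p, φ (C (AdjoinRoot.mk _ p)) =
        Ideal.Quotient.mk I (aeval (MvPolynomial.X j : MvPolynomial (Fin 2) K) p) := by
  have hi : Ideal.Quotient.mk I (MvPolynomial.X i ^ a - 1) = 0 :=
    Ideal.Quotient.eq_zero_iff_mem.mpr (hI ▸ Ideal.subset_span (by simp))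
  have hj : Ideal.Quotient.mk I (MvPolynomial.X j ^ b - 1) = 0 :=
    Ideal.Quotient.eq_zero_iff_mem.mpr (hI ▸ Ideal.subset_span (by simp))
  let coeffHom : AdjoinRoot (X ^ b - 1 : K[X]) →+* MvPolynomial (Fin 2) K ⧸ I :=
    AdjoinRoot.lift (algebraMap K _) (Ideal.Quotient.mk I (MvPolynomial.X j))
      (by simpa using hj)
  let φ := eval₂RingHom coeffHom (Ideal.Quotient.mk I (MvPolynomial.X i))
  have hX : φ X = Ideal.Quotient.mk I (MvPolynomial.X i) := by simp [φ]
  have hC (p : K[X]) : φ (C (AdjoinRoot.mk _ p)) =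
      Ideal.Quotient.mk I (aeval (MvPolynomial.X j : MvPolynomial (Fin 2) K) p) := by
    simp only [φ, coeffHom, coe_eval₂RingHom, eval₂_C, AdjoinRoot.lift_mk, aeval_def,
      hom_eval₂]
    rfl
  let S := AdjoinRoot (X ^ a - 1 : (AdjoinRoot (X ^ b - 1 : K[X]))[X])
  let xS : S := AdjoinRoot.root _
  let yS : S := AdjoinRoot.of _ (AdjoinRoot.root _)
  let ψ₀ : MvPolynomial (Fin 2) K →ₐ[K] S :=
    MvPolynomial.aeval fun s => if s = i then xS else yS
  have hxS : xS ^ a - 1 = 0 := by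
    have := AdjoinRoot.mk_self (f := (X ^ a - 1 : (AdjoinRoot (X ^ b - 1 : K[X]))[X]))
    rwa [map_sub, map_pow, AdjoinRoot.mk_X, map_one] at this
  have hyS : yS ^ b - 1 = 0 := by
    have := congrArg (AdjoinRoot.of (X ^ a - 1 : (AdjoinRoot (X ^ b - 1 : K[X]))[X]))
      (AdjoinRoot.eval₂_root (X ^ b - 1 : K[X]))
    simpa [yS] using this
  have hψ₀ : ∀ f ∈ I, (ψ₀ : MvPolynomial (Fin 2) K →+* S) f = 0 := by
    intro f hf
    have hle : I ≤ RingHom.ker (ψ₀ : MvPolynomial (Fin 2) K →+* S) := by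
      rw [hI, Ideal.span_le]
      rintro _ (rfl | rfl)
      · simpa [ψ₀] using hxS
      · simpa [ψ₀, hij.symm] using hyS
    exact hle hf
  let ψ : MvPolynomial (Fin 2) K ⧸ I →+* S := Ideal.Quotient.lift I _ hψ₀
  have hψφ : ψ.comp φ = AdjoinRoot.mk _ := by
    refine Polynomial.ringHom_ext' ?_ ?_
    · refine RingHom.ext fun s => ?_
      obtain ⟨p, rfl⟩ := AdjoinRoot.mk_surjective s
      change ψ (φ (C _)) = AdjoinRoot.of _ _
      rw [hC, Ideal.Quotient.lift_mk]
      change ψ₀ (aeval _ p) = _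
      rw [← aeval_algHom_apply, ← AdjoinRoot.aeval_eq, aeval_def, aeval_def, hom_eval₂]
      simp only [ψ₀, MvPolynomial.aeval_X, hij.symm, if_false]
      rfl
    · change ψ (φ X) = _
      rw [hX, Ideal.Quotient.lift_mk]
      simp only [ψ₀, RingHom.coe_coe, MvPolynomial.aeval_X, if_true]
      rfl
  refine ⟨φ, fun r => ?_, fun f => ⟨fun hf => ?_, ?_⟩, hX, hC⟩
  · obtain ⟨p, rfl⟩ := Ideal.Quotient.mk_surjective r
    induction p using MvPolynomial.induction_on with
    | C k => exact ⟨C (AdjoinRoot.mk _ (C k)), by rw [hC, aeval_C]; rfl⟩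
    | add p q hp hq =>
      obtain ⟨p', hp'⟩ := hp
      obtain ⟨q', hq'⟩ := hq
      exact ⟨p' + q', by rw [map_add, map_add, hp', hq']⟩
    | mul_X p s hp =>
      obtain ⟨p', hp'⟩ := hp
      obtain rfl | rfl : s = i ∨ s = j := by omega
      · exact ⟨p' * X, by rw [map_mul, map_mul, hp', hX]⟩
      · exact ⟨p' * C (AdjoinRoot.mk _ X), by rw [map_mul, map_mul, hp', hC, aeval_X]⟩
  · rw [← AdjoinRoot.mk_eq_zero, ← hψφ, RingHom.comp_apply, hf, map_zero]
  · rintro ⟨g, rfl⟩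
    rw [map_mul, map_sub, map_pow, map_one, hX, ← map_pow, ← map_one (Ideal.Quotient.mk I),
      ← map_sub, hi, zero_mul]

/-- The image of a polynomial in one of the variables has principal annihilator. -/
lemma annI_aeval_X_isPrincipal {i j : Fin 2} (hij : i ≠ j) {a b : ℕ} (ha : 0 < a)
    {I : Ideal (MvPolynomial (Fin 2) K)}
    (hI : I = Ideal.span {MvPolynomial.X i ^ a - 1, MvPolynomial.X j ^ b - 1}) (p : K[X]) :
    (annI (MvPolynomial (Fin 2) K ⧸ I) (Ideal.Quotient.mk I
      (aeval (MvPolynomial.X j : MvPolynomial (Fin 2) K) p))).IsPrincipal := by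
  obtain ⟨φ, hφ, hker, -, hC⟩ := exists_presentation hij a b hI
  rw [← hC]
  exact annI_map_C_isPrincipal φ hφ (monic_X_pow_sub_C 1 ha.ne') (by simpa using hker) _

/-- An element `xᵏ + z(y)` with `k` dividing the order of `x` has principal annihilator. -/
lemma annI_X_pow_add_aeval_X_isPrincipal {i j : Fin 2} (hij : i ≠ j) {k k' b : ℕ} (hk : 0 < k)
    {I : Ideal (MvPolynomial (Fin 2) K)}
    (hI : I = Ideal.span {MvPolynomial.X i ^ (k * k') - 1, MvPolynomial.X j ^ b - 1})
    (z : K[X]) :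
    (annI (MvPolynomial (Fin 2) K ⧸ I) (Ideal.Quotient.mk I
      (MvPolynomial.X i ^ k +
        aeval (MvPolynomial.X j : MvPolynomial (Fin 2) K) z))).IsPrincipal := by
  obtain ⟨φ, hφ, hker, hX, hC⟩ := exists_presentation hij (k * k') b hI
  rw [map_add, map_pow, ← hC, ← hX, ← map_pow, ← map_add]
  set ζ := AdjoinRoot.mk (X ^ b - 1 : K[X]) z
  obtain ⟨q, hq⟩ := sub_dvd_pow_sub_pow (X ^ k) (C (-ζ)) k'
  refine annI_map_monic_isPrincipal φ hφ (q := q) (e := (-ζ) ^ k' - 1)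
    (monic_X_pow_add_C ζ hk.ne') ?_ hker
  rw [C_neg, sub_neg_eq_add] at hq
  rw [← hq, pow_mul]
  simp

end Presentation

lemma IsUniOrSemiperiodic.annI_isPrincipal {l m : ℕ} (hl : 0 < l) (hm : 0 < m)
    {c : BBRing l m} (hc : IsUniOrSemiperiodic l m c) :
    (annI (BBRing l m) c).IsPrincipal := by
  obtain ⟨p, rfl⟩ | ⟨p, rfl⟩ | ⟨k, k', z, hk, -, rfl, rfl⟩ | ⟨k, k', z, hk, -, rfl, rfl⟩ := hc
  · exact annI_aeval_X_isPrincipal one_ne_zero hm (congrArg _ (Set.pair_comm _ _)) p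
  · exact annI_aeval_X_isPrincipal zero_ne_one hl rfl p
  · exact annI_X_pow_add_aeval_X_isPrincipal zero_ne_one hk rfl z
  · exact annI_X_pow_add_aeval_X_isPrincipal one_ne_zero hk
      (congrArg _ (Set.pair_comm _ _)) z

set_option synthInstance.maxHeartbeats 1000000 in
/-- If `c` is univariate or semiperiodic then `ann(c)` is principal; consequently
a pure bivariate bicycle code with `c, d` each univariate or semiperiodic is
principal (pure with `ann(c)`, `ann(d)` principal ideals). -/
theorem stmt17 (l m : ℕ) (hl : 0 < l) (hm : 0 < m) :
    (∀ c : BBRing l m, IsUniOrSemiperiodic l m c →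
      (annI (BBRing l m) c).IsPrincipal) ∧
    (∀ c d : BBRing l m, IsUniOrSemiperiodic l m c → IsUniOrSemiperiodic l m d →
      Ideal.span {c} ⊓ Ideal.span {d} = Ideal.span {c * d} →
      (Hpureh (BBRing l m) c d ⊔ Hpurev (BBRing l m) c d = ⊤ ∧
       (annI (BBRing l m) c).IsPrincipal ∧ (annI (BBRing l m) d).IsPrincipal)) := by
  refine ⟨fun c hc => hc.annI_isPrincipal hl hm, fun c d hc hd h => ?_⟩
  exact ⟨Hpureh_sup_Hpurev_eq_top h, hc.annI_isPrincipal hl hm, hd.annI_isPrincipal hl hm⟩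
end
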